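/- Fix a positive integer $m$, $0<p<\infty$, and $1<\alpha<\infty$. For each positive integer $n$ let $p_{\alpha,n}(\mathbf{z})=\sqrt{\alpha/n}\sum_{i=1}^n z_i$. Then $\lim_{n\to\infty}\|p_{\alpha,n}^m\|_{A_\alpha^p(\mathbb{D}^n)}=\Gamma\left(\frac{mp}{2}+1\right)^{1/p}$, i.e. $\lim_{n\to\infty}\int_{\mathbb{D}^n}\left|\sqrt{\tfrac{\alpha}{n}}\sum_{i=1}^n z_i\right|^{mp}dA_\alpha(z_1)\cdots dA_\alpha(z_n)=\Gamma\left(\frac{mp}{2}+1\right)$. -/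

import Mathlib

open MeasureTheory Metric Filter

/-- The weighted Bergman measure `dA_α(z) = (α-1)(1-|z|²)^(α-2) dA(z)` on the unit disk,
where `dA = dx dy / π` is the normalized area measure. -/
noncomputable def bergmanMeasure (α : ℝ) : Measure ℂ :=
  ((volume : Measure ℂ).restrict (ball (0 : ℂ) 1)).withDensity
    fun z => ENNReal.ofReal ((α - 1) * (1 - ‖z‖ ^ 2) ^ (α - 2) / Real.pi)

/-- The product Bergman measure `dA_α(z₁) ⋯ dA_α(zₙ)` on the polydisc. -/
noncomputable def bergmanMeasurePi (n : ℕ) (α : ℝ) : Measure (Fin n → ℂ) :=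
  Measure.pi fun _ => bergmanMeasure α

/-! Write `Sₙ = √(α/n) ∑ᵢ zᵢ`. The Bergman measure is invariant under multiplication by `i`, so
each `zᵢ` has mean zero and its projections on all directions have the same variance; by the
one-dimensional central limit theorem and Lévy's continuity theorem, `Sₙ` converges in law to a
complex Gaussian. As `zᵢ` is bounded, Hoeffding's lemma makes the projections of `Sₙ` sub-Gaussian
with a parameter independent of `n`, so that every absolute moment of `Sₙ` is bounded in `n`. Hence
`|Sₙ|^q` is uniformly integrable and its integral converges to the Gaussian moment. -/

open ProbabilityTheory Topology
open scoped NNReal ENNReal RealInnerProductSpace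

section TruncatedMoments

variable {Ω : Type*} [MeasurableSpace Ω]

lemma sub_min_le_rpow_div_rpow {x R r : ℝ} (hx : 0 ≤ x) (hR : 0 < R) (hr : 1 ≤ r) :
    x - min x R ≤ x ^ r / R ^ (r - 1) := by
  rcases le_total x R with hxR | hRx
  · rw [min_eq_left hxR, sub_self]
    positivity
  · have hx0 : 0 < x := hR.trans_le hRx
    rw [min_eq_right hRx, le_div_iff₀ (by positivity)]
    calc (x - R) * R ^ (r - 1) ≤ x * x ^ (r - 1) := by
          have : R ^ (r - 1) ≤ x ^ (r - 1) := Real.rpow_le_rpow hR.le hRx (by linarith)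
          gcongr
          linarith
      _ = x ^ r := by rw [mul_comm, ← Real.rpow_add_one hx0.ne', sub_add_cancel]

lemma integrable_min_const_of_nonneg {μ : Measure Ω} {f : Ω → ℝ} (hf : Integrable f μ)
    (hf0 : 0 ≤ f) {R : ℝ} (hR : 0 ≤ R) : Integrable (fun x => min (f x) R) μ := by
  refine hf.mono' (hf.aestronglyMeasurable.inf aestronglyMeasurable_const)
    (ae_of_all _ fun x => ?_)
  rw [Real.norm_of_nonneg (le_min (hf0 x) hR)]
  exact min_le_left _ _

lemma abs_integral_min_sub_integral_le {μ : Measure Ω} {f : Ω → ℝ} {R C r : ℝ} (hR : 0 < R)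
    (hr : 1 ≤ r) (hf0 : 0 ≤ f) (hf : Integrable f μ) (hfr : Integrable (fun x => f x ^ r) μ)
    (hC : ∫ x, f x ^ r ∂μ ≤ C) :
    |∫ x, f x ∂μ - ∫ x, min (f x) R ∂μ| ≤ C / R ^ (r - 1) := by
  have hmin := integrable_min_const_of_nonneg hf hf0 hR.le
  rw [← integral_sub hf hmin, abs_of_nonneg (integral_nonneg fun x => by simp)]
  calc ∫ x, f x - min (f x) R ∂μ ≤ ∫ x, f x ^ r / R ^ (r - 1) ∂μ :=
        integral_mono (hf.sub hmin) (hfr.div_const _) fun x =>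
          sub_min_le_rpow_div_rpow (hf0 x) hR hr
    _ ≤ C / R ^ (r - 1) := by
        rw [integral_div]
        gcongr

lemma tendsto_integral_min_atTop {μ : Measure Ω} {f : Ω → ℝ} (hf : Integrable f μ) :
    Tendsto (fun R : ℝ => ∫ x, min (f x) R ∂μ) atTop (𝓝 (∫ x, f x ∂μ)) := by
  refine tendsto_integral_filter_of_dominated_convergence (fun x => |f x|)
    (.of_forall fun R => hf.aestronglyMeasurable.inf aestronglyMeasurable_const) ?_ hf.abs ?_
  · filter_upwards [eventually_ge_atTop 0] with R hR
    refine ae_of_all _ fun x => abs_le.2 ⟨le_min (neg_abs_le _) ?_, ?_⟩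
    · linarith [abs_nonneg (f x)]
    · exact (min_le_left _ _).trans (le_abs_self _)
  · refine ae_of_all _ fun x => tendsto_const_nhds.congr' ?_
    filter_upwards [eventually_ge_atTop (f x)] with R hR using (min_eq_left hR).symm

lemma tendsto_integral_min_of_tendsto [TopologicalSpace Ω] [OpensMeasurableSpace Ω] {ι : Type*}
    {l : Filter ι} {ν : ι → ProbabilityMeasure Ω} {ν₀ : ProbabilityMeasure Ω}
    (hν : Tendsto ν l (𝓝 ν₀)) {f : Ω → ℝ} (hcont : Continuous f) (hf0 : 0 ≤ f) {R : ℝ}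
    (hR : 0 ≤ R) :
    Tendsto (fun i => ∫ x, min (f x) R ∂(ν i : Measure Ω)) l
      (𝓝 (∫ x, min (f x) R ∂(ν₀ : Measure Ω))) :=
  ProbabilityMeasure.tendsto_iff_forall_integral_tendsto.1 hν <|
    .ofNormedAddCommGroup (fun x => min (f x) R) (by fun_prop) R fun x => by
      rw [Real.norm_of_nonneg (le_min (hf0 x) hR)]
      exact min_le_right _ _

-- A bounded moment of order `r > 1` makes the truncation error uniform along the sequence.
theorem tendsto_integral_of_tendsto_of_integral_rpow_le [TopologicalSpace Ω]
    [OpensMeasurableSpace Ω] {ι : Type*} {l : Filter ι} {ν : ι → ProbabilityMeasure Ω}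
    {ν₀ : ProbabilityMeasure Ω} (hν : Tendsto ν l (𝓝 ν₀)) {f : Ω → ℝ} (hcont : Continuous f)
    (hf0 : 0 ≤ f) {r C : ℝ} (hr : 1 < r) (hf : ∀ i, Integrable f (ν i : Measure Ω))
    (hfr : ∀ i, Integrable (fun x => f x ^ r) (ν i : Measure Ω))
    (hC : ∀ i, ∫ x, f x ^ r ∂(ν i : Measure Ω) ≤ C) (hf₀ : Integrable f (ν₀ : Measure Ω)) :
    Tendsto (fun i => ∫ x, f x ∂(ν i : Measure Ω)) l (𝓝 (∫ x, f x ∂(ν₀ : Measure Ω))) := by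
  have herr : Tendsto (fun R : ℝ => C / R ^ (r - 1)) atTop (𝓝 0) :=
    tendsto_const_nhds.div_atTop (tendsto_rpow_atTop (by linarith))
  have hunif : TendstoUniformly (fun (R : ℝ) i => ∫ x, min (f x) R ∂(ν i : Measure Ω))
      (fun i => ∫ x, f x ∂(ν i : Measure Ω)) atTop := by
    refine Metric.tendstoUniformly_iff.2 fun ε hε => ?_
    filter_upwards [eventually_gt_atTop 0, herr.eventually_lt_const hε] with R hR hRε i
    exact (abs_integral_min_sub_integral_le hR hr.le hf0 (hf i) (hfr i) (hC i)).trans_lt hRε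
  refine hunif.tendsto_of_eventually_tendsto ?_ (tendsto_integral_min_atTop hf₀)
  filter_upwards [eventually_ge_atTop 0] with R hR
  exact tendsto_integral_min_of_tendsto hν hcont hf0 hR

end TruncatedMoments

section SubgaussianMoments

lemma integrable_rpow_abs_of_hasSubgaussianMGF {Ω : Type*} [MeasurableSpace Ω] {μ : Measure Ω}
    {X : Ω → ℝ} {c : ℝ≥0} (hX : HasSubgaussianMGF X c μ) {q : ℝ} (hq : 0 ≤ q) :
    Integrable (fun ω => |X ω| ^ q) μ :=
  integrable_rpow_abs_of_integrable_exp_mul one_ne_zero (hX.integrable_exp_mul 1)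
    (hX.integrable_exp_mul (-1)) hq

lemma integral_rpow_abs_le_of_hasSubgaussianMGF {Ω : Type*} [MeasurableSpace Ω] {μ : Measure Ω}
    {X : Ω → ℝ} {c : ℝ≥0} (hX : HasSubgaussianMGF X c μ) {q : ℝ} (hq : 0 ≤ q) :
    ∫ ω, |X ω| ^ q ∂μ ≤ q ^ q * (2 * Real.exp (c / 2)) := by
  have hexp (s : ℝ) := hX.integrable_exp_mul s
  have hpoint (x : ℝ) : |x| ^ q ≤ q ^ q * (Real.exp (1 * x) + Real.exp (-1 * x)) := by
    have h := rpow_abs_le_mul_max_exp x hq one_ne_zero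
    rw [abs_one, div_one] at h
    exact h.trans (by gcongr; exact max_le_add_of_nonneg (by positivity) (by positivity))
  calc ∫ ω, |X ω| ^ q ∂μ
      ≤ ∫ ω, q ^ q * (Real.exp (1 * X ω) + Real.exp (-1 * X ω)) ∂μ :=
        integral_mono (integrable_rpow_abs_of_hasSubgaussianMGF hX hq)
          (((hexp 1).add (hexp (-1))).const_mul _) fun ω => hpoint (X ω)
    _ = q ^ q * (mgf X μ 1 + mgf X μ (-1)) := by
        rw [integral_const_mul, integral_add (hexp 1) (hexp (-1))]
        rfl
    _ ≤ q ^ q * (2 * Real.exp (c / 2)) := by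
        have hpos := hX.mgf_le 1
        have hneg := hX.mgf_le (-1)
        simp only [one_pow, even_two.neg_pow, mul_one] at hpos hneg
        gcongr
        linarith

variable {E : Type*} [NormedAddCommGroup E] [InnerProductSpace ℝ E]
  {ι : Type*} [Fintype ι] (b : OrthonormalBasis ι ℝ E)

lemma norm_rpow_le_mul_sum_rpow_abs_inner {q : ℝ} (hq : 0 < q) (x : E) :
    ‖x‖ ^ q ≤ √(Fintype.card ι) ^ q * ∑ i, |⟪x, b i⟫| ^ q := by
  have hx := b.norm_le_card_mul_iSup_norm_inner x
  simp only [Real.norm_eq_abs, real_inner_comm x] at hx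
  cases isEmpty_or_nonempty ι
  · have : ‖x‖ = 0 := le_antisymm (by simpa using hx) (norm_nonneg x)
    simp [this, Real.zero_rpow hq.ne']
  · obtain ⟨j, hj⟩ := exists_eq_ciSup_of_finite (f := fun i => |⟪x, b i⟫|)
    rw [← hj] at hx
    calc ‖x‖ ^ q ≤ (√(Fintype.card ι) * |⟪x, b j⟫|) ^ q := by gcongr
      _ = √(Fintype.card ι) ^ q * |⟪x, b j⟫| ^ q :=
          Real.mul_rpow (by positivity) (by positivity)
      _ ≤ √(Fintype.card ι) ^ q * ∑ i, |⟪x, b i⟫| ^ q := by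
          gcongr
          exact Finset.single_le_sum (f := fun i => |⟪x, b i⟫| ^ q) (fun i _ => by positivity)
            (Finset.mem_univ j)

variable [MeasurableSpace E] [OpensMeasurableSpace E] {ρ : Measure E} {c : ℝ≥0} {q : ℝ}

lemma integrable_norm_rpow_of_hasSubgaussianMGF
    (hρ : ∀ i, HasSubgaussianMGF (fun x => ⟪x, b i⟫) c ρ) (hq : 0 < q) :
    Integrable (fun x => ‖x‖ ^ q) ρ := by
  refine ((integrable_finsetSum Finset.univ fun i _ =>
    integrable_rpow_abs_of_hasSubgaussianMGF (hρ i) hq.le).const_mul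
      (√(Fintype.card ι) ^ q)).mono' (Measurable.aestronglyMeasurable (by fun_prop))
    (ae_of_all _ fun x => ?_)
  rw [Real.norm_of_nonneg (by positivity)]
  exact norm_rpow_le_mul_sum_rpow_abs_inner b hq x

lemma integral_norm_rpow_le_of_hasSubgaussianMGF
    (hρ : ∀ i, HasSubgaussianMGF (fun x => ⟪x, b i⟫) c ρ) (hq : 0 < q) :
    ∫ x, ‖x‖ ^ q ∂ρ ≤
      √(Fintype.card ι) ^ q * (Fintype.card ι * (q ^ q * (2 * Real.exp (c / 2)))) := by
  have hint (i : ι) := integrable_rpow_abs_of_hasSubgaussianMGF (hρ i) hq.le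
  calc ∫ x, ‖x‖ ^ q ∂ρ
      ≤ ∫ x, √(Fintype.card ι) ^ q * ∑ i, |⟪x, b i⟫| ^ q ∂ρ :=
        integral_mono (integrable_norm_rpow_of_hasSubgaussianMGF b hρ hq)
          ((integrable_finsetSum _ fun i _ => hint i).const_mul _)
          (norm_rpow_le_mul_sum_rpow_abs_inner b hq)
    _ = √(Fintype.card ι) ^ q * ∑ i, ∫ x, |⟪x, b i⟫| ^ q ∂ρ := by
        rw [integral_const_mul, integral_finsetSum _ fun i _ => hint i]
    _ ≤ _ := by
        rw [← nsmul_eq_mul, ← Finset.card_univ, ← Finset.sum_const]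
        gcongr with i
        exact integral_rpow_abs_le_of_hasSubgaussianMGF (hρ i) hq.le

end SubgaussianMoments

section SubgaussianLaws

variable {Ω Ω' : Type*} [MeasurableSpace Ω] [MeasurableSpace Ω'] {P : Measure Ω}

lemma hasSubgaussianMGF_of_le {X : Ω → ℝ} {c d : ℝ≥0} (hX : HasSubgaussianMGF X c P)
    (hcd : c ≤ d) : HasSubgaussianMGF X d P where
  integrable_exp_mul := hX.integrable_exp_mul
  mgf_le t := (hX.mgf_le t).trans (by gcongr)

lemma hasSubgaussianMGF_map_iff {Y : Ω → Ω'} {X : Ω' → ℝ} {c : ℝ≥0} (hY : AEMeasurable Y P)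
    (hX : AEMeasurable X (P.map Y)) :
    HasSubgaussianMGF X c (P.map Y) ↔ HasSubgaussianMGF (fun ω => X (Y ω)) c P := by
  rw [← HasSubgaussianMGF.id_map_iff hX, AEMeasurable.map_map_of_aemeasurable hX hY,
    HasSubgaussianMGF.id_map_iff (hX.comp_aemeasurable hY)]
  rfl

lemma hasSubgaussianMGF_inv_sqrt_mul_sum_pi {μ : Measure Ω} [IsProbabilityMeasure μ] {X : Ω → ℝ}
    {c : ℝ≥0} (hX : HasSubgaussianMGF X c μ) (v : ℝ≥0) (n : ℕ) :
    HasSubgaussianMGF (fun ω : Fin n → Ω => (√(n * v))⁻¹ * ∑ i, X (ω i)) (c / v)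
      (Measure.pi fun _ => μ) := by
  have hcoord (i : Fin n) : HasSubgaussianMGF (fun ω : Fin n → Ω => X (ω i)) c
      (Measure.pi fun _ => μ) :=
    .of_map (measurable_pi_apply i).aemeasurable
      (by rwa [(measurePreserving_eval (fun _ => μ) i).map_eq])
  have hsum := HasSubgaussianMGF.sum_of_iIndepFun (s := Finset.univ)
    (iIndepFun_pi fun _ => hX.aemeasurable) fun i _ => hcoord i
  have hparam : NNReal.mk ((√(n * v))⁻¹ ^ 2) (sq_nonneg _) * ∑ _i : Fin n, c ≤ c / v := by
    rw [← NNReal.coe_le_coe]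
    rcases n.eq_zero_or_pos with rfl | hn
    · simpa using by positivity
    · have : (n : ℝ) ≠ 0 := by positivity
      simp [field]
  exact hasSubgaussianMGF_of_le (hsum.const_mul _) hparam

end SubgaussianLaws

section IsotropicCLT

variable {E : Type*} [NormedAddCommGroup E] [InnerProductSpace ℝ E] [MeasurableSpace E]

/-- The law of `(n v)^(-1/2) ∑ᵢ xᵢ` for `n` independent points `xᵢ` of law `μ`, where `v` stands
for the variance of the one-dimensional projections of `μ`. -/
noncomputable def normalizedSumLaw (μ : Measure E) (v : ℝ≥0) (n : ℕ) : Measure E :=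
  (Measure.pi fun _ : Fin n => μ).map fun x => (√(n * v))⁻¹ • ∑ i, x i

variable [BorelSpace E] {μ : Measure E} {v : ℝ≥0}

lemma charFun_smul_eq_charFun_map_inner (s : ℝ) (t : E) :
    charFun μ (s • t) = charFun (μ.map fun x => ⟪x, t⟫) s := by
  rw [charFun_apply, charFun_apply_real, integral_map (by fun_prop) (by fun_prop)]
  simp [inner_smul_right]

variable [IsProbabilityMeasure μ]

lemma hasSubgaussianMGF_inner_of_ae_norm_le {R : ℝ≥0} (hR : ∀ᵐ x ∂μ, ‖x‖ ≤ R) {t : E}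
    (hmean : ∫ x, ⟪x, t⟫ ∂μ = 0) :
    HasSubgaussianMGF (fun x => ⟪x, t⟫) ((R * ‖t‖₊) ^ 2) μ := by
  have h := hasSubgaussianMGF_of_mem_Icc_of_integral_eq_zero (μ := μ) (a := -(R * ‖t‖))
    (b := R * ‖t‖) (X := fun x => ⟪x, t⟫) (by fun_prop) ?_ hmean
  · convert h
    ext
    simp [← two_mul]
  · filter_upwards [hR] with x hx
    exact abs_le.1 ((abs_real_inner_le_norm x t).trans (by gcongr))

variable [FiniteDimensional ℝ E]

instance isProbabilityMeasure_normalizedSumLaw (n : ℕ) :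
    IsProbabilityMeasure (normalizedSumLaw μ v n) :=
  Measure.isProbabilityMeasure_map (by fun_prop)

lemma charFun_normalizedSumLaw (n : ℕ) (t : E) :
    charFun (normalizedSumLaw μ v n) t = charFun μ ((√(n * v))⁻¹ • t) ^ n := by
  rw [normalizedSumLaw, charFun_map_smul_comp (by fun_prop), charFun_map_sum_pi_eq_prod]
  simp

-- Divided by its standard deviation, `⟪x, t⟫` falls under the one-dimensional limit theorem.
lemma tendsto_charFun_normalizedSumLaw (hv : 0 < v) (hmean : ∀ t : E, ∫ x, ⟪x, t⟫ ∂μ = 0)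
    (hvar : ∀ t : E, ∫ x, ⟪x, t⟫ ^ 2 ∂μ = v * ‖t‖ ^ 2) (t : E) :
    Tendsto (fun n => charFun (normalizedSumLaw μ v n) t) atTop
      (𝓝 (charFun (stdGaussian E) t)) := by
  rcases eq_or_ne t 0 with rfl | ht
  · simp
  have ht' : ‖t‖ ≠ 0 := norm_ne_zero_iff.2 ht
  set σ : ℝ := √v * ‖t‖ with hσ
  have hσ2 : σ ^ 2 = v * ‖t‖ ^ 2 := by rw [hσ, mul_pow, Real.sq_sqrt v.coe_nonneg]
  have hσ0 : σ ≠ 0 := by positivity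
  have h := tendsto_charFun_inv_sqrt_mul_pow (P := μ) (X := fun x => σ⁻¹ * ⟪x, t⟫)
    (by fun_prop) (by rw [integral_const_mul, hmean, mul_zero])
    (by simp only [Pi.pow_apply, mul_pow]
        rw [integral_const_mul, hvar, ← hσ2, inv_pow, inv_mul_cancel₀ (pow_ne_zero 2 hσ0)])
    ‖t‖
  rw [charFun_stdGaussian]
  convert h using 2 with n
  rw [charFun_normalizedSumLaw, charFun_smul_eq_charFun_map_inner,
    charFun_map_mul_comp (by fun_prop), hσ, Real.sqrt_mul n.cast_nonneg]
  congr 2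
  field_simp

lemma hasSubgaussianMGF_inner_normalizedSumLaw {c : ℝ≥0} {t : E}
    (hμ : HasSubgaussianMGF (fun x => ⟪x, t⟫) c μ) (n : ℕ) :
    HasSubgaussianMGF (fun x => ⟪x, t⟫) (c / v) (normalizedSumLaw μ v n) := by
  rw [normalizedSumLaw, hasSubgaussianMGF_map_iff (by fun_prop) (by fun_prop)]
  simpa only [real_inner_smul_left, sum_inner] using
    hasSubgaussianMGF_inv_sqrt_mul_sum_pi hμ v n

lemma integrable_norm_rpow_stdGaussian {q : ℝ} (hq : 0 ≤ q) :
    Integrable (fun x => ‖x‖ ^ q) (stdGaussian E) := by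
  have h := (IsGaussian.memLp_id (stdGaussian E) (ENNReal.ofReal q)
    ENNReal.ofReal_ne_top).integrable_norm_rpow'
  simpa [ENNReal.toReal_ofReal hq] using h

theorem tendsto_integral_norm_rpow_normalizedSumLaw (hv : 0 < v) {R : ℝ≥0}
    (hR : ∀ᵐ x ∂μ, ‖x‖ ≤ R) (hmean : ∀ t : E, ∫ x, ⟪x, t⟫ ∂μ = 0)
    (hvar : ∀ t : E, ∫ x, ⟪x, t⟫ ^ 2 ∂μ = v * ‖t‖ ^ 2) {q : ℝ} (hq : 0 < q) :
    Tendsto (fun n => ∫ x, ‖x‖ ^ q ∂(normalizedSumLaw μ v n)) atTop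
      (𝓝 (∫ x, ‖x‖ ^ q ∂(stdGaussian E))) := by
  let b := stdOrthonormalBasis ℝ E
  let ν (n : ℕ) : ProbabilityMeasure E := ⟨normalizedSumLaw μ v n, inferInstance⟩
  have hν : Tendsto ν atTop (𝓝 ⟨stdGaussian E, inferInstance⟩) :=
    ProbabilityMeasure.tendsto_iff_tendsto_charFun.2
      (tendsto_charFun_normalizedSumLaw hv hmean hvar)
  have hsub (n : ℕ) (i) :
      HasSubgaussianMGF (fun x => ⟪x, b i⟫) (R ^ 2 / v) (normalizedSumLaw μ v n) :=
    hasSubgaussianMGF_inner_normalizedSumLaw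
      (by simpa using hasSubgaussianMGF_inner_of_ae_norm_le hR (hmean (b i))) n
  have hsq (x : E) : (‖x‖ ^ q) ^ (2 : ℝ) = ‖x‖ ^ (q * 2) :=
    (Real.rpow_mul (norm_nonneg x) q 2).symm
  have hq2 : 0 < q * 2 := by positivity
  exact tendsto_integral_of_tendsto_of_integral_rpow_le hν
    (continuous_norm.rpow_const fun _ => Or.inr hq.le) (fun x => by positivity) one_lt_two
    (fun n => integrable_norm_rpow_of_hasSubgaussianMGF b (hsub n) hq)
    (fun n => (integrable_norm_rpow_of_hasSubgaussianMGF b (hsub n) hq2).congr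
      (ae_of_all _ fun x => (hsq x).symm))
    (fun n => (integral_congr_ae (ae_of_all _ hsq)).trans_le
      (integral_norm_rpow_le_of_hasSubgaussianMGF b (hsub n) hq2))
    (integrable_norm_rpow_stdGaussian hq.le)

end IsotropicCLT

section GaussianMoments

variable {E : Type*} [NormedAddCommGroup E] [InnerProductSpace ℝ E]

/-- The density of the standard Gaussian measure with respect to Lebesgue measure. -/
noncomputable def stdGaussianDensity (x : E) : ℝ :=
  (2 * Real.pi) ^ (-(Module.finrank ℝ E / 2 : ℝ)) * Real.exp (-(1 / 2) * ‖x‖ ^ 2)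

lemma stdGaussianDensity_nonneg (x : E) : 0 ≤ stdGaussianDensity x := by
  unfold stdGaussianDensity
  positivity

lemma continuous_stdGaussianDensity : Continuous (stdGaussianDensity (E := E)) := by
  unfold stdGaussianDensity
  fun_prop

variable [MeasurableSpace E] [BorelSpace E] [FiniteDimensional ℝ E]

lemma integral_stdGaussianDensity : ∫ x : E, stdGaussianDensity x = 1 := by
  have h := GaussianFourier.integral_rexp_neg_mul_sq_norm (V := E) (b := 1 / 2) (by norm_num)
  simp only [stdGaussianDensity]
  rw [integral_const_mul, h, show Real.pi / (1 / 2) = 2 * Real.pi by ring,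
    ← Real.rpow_add (by positivity), neg_add_cancel, Real.rpow_zero]

lemma integral_stdGaussianDensity_smul_cexp_inner (t : E) :
    ∫ x : E, stdGaussianDensity x • Complex.exp (⟪x, t⟫ * Complex.I) =
      Complex.exp (-‖t‖ ^ 2 / 2) := by
  have h := GaussianFourier.integral_cexp_neg_mul_sq_norm_add (b := 1 / 2) (by simp) Complex.I t
  have hpi : ((2 * Real.pi : ℝ) : ℂ) ≠ 0 := by exact_mod_cast Real.two_pi_pos.ne'
  calc ∫ x : E, stdGaussianDensity x • Complex.exp (⟪x, t⟫ * Complex.I)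
      = ∫ x : E, ((2 * Real.pi : ℝ) : ℂ) ^ (-(Module.finrank ℝ E / 2 : ℂ)) *
          Complex.exp (-(1 / 2) * ‖x‖ ^ 2 + Complex.I * ⟪t, x⟫) := by
        congr with x
        rw [stdGaussianDensity, Complex.real_smul, Complex.ofReal_mul,
          Complex.ofReal_cpow (by positivity), Complex.exp_add, real_inner_comm, mul_assoc]
        push_cast
        ring_nf
    _ = Complex.exp (-‖t‖ ^ 2 / 2) := by
        rw [integral_const_mul, h, show (Real.pi / (1 / 2) : ℂ) = (2 * Real.pi : ℝ) by
          push_cast; ring, ← mul_assoc, ← Complex.cpow_add _ _ hpi, neg_add_cancel,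
          Complex.cpow_zero, one_mul, Complex.I_sq]
        congr 1
        ring

lemma stdGaussian_eq_withDensity :
    stdGaussian E = volume.withDensity fun x => ENNReal.ofReal (stdGaussianDensity x) := by
  have hint : Integrable (stdGaussianDensity (E := E)) :=
    .of_integral_ne_zero (by simp [integral_stdGaussianDensity])
  have := isFiniteMeasure_withDensity_ofReal hint.2
  refine Measure.ext_of_charFun (funext fun t => ?_)
  rw [charFun_stdGaussian, charFun_apply, integral_withDensity_eq_integral_toReal_smul
    continuous_stdGaussianDensity.measurable.ennreal_ofReal (by simp)]
  simp only [ENNReal.toReal_ofReal (stdGaussianDensity_nonneg _),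
    integral_stdGaussianDensity_smul_cexp_inner]

lemma integral_stdGaussian {F : Type*} [NormedAddCommGroup F] [NormedSpace ℝ F] (g : E → F) :
    ∫ x, g x ∂(stdGaussian E) = ∫ x, stdGaussianDensity x • g x := by
  rw [stdGaussian_eq_withDensity, integral_withDensity_eq_integral_toReal_smul
    continuous_stdGaussianDensity.measurable.ennreal_ofReal (by simp)]
  simp only [ENNReal.toReal_ofReal (stdGaussianDensity_nonneg _)]

lemma measureReal_ball_zero_one [Nontrivial E] :
    (volume : Measure E).real (ball 0 1) =
      Real.pi ^ (Module.finrank ℝ E / 2 : ℝ) / Real.Gamma (Module.finrank ℝ E / 2 + 1) := by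
  rw [Measure.real, InnerProductSpace.volume_ball, ENNReal.ofReal_one, one_pow, one_mul,
    ENNReal.toReal_ofReal (by positivity), Real.sqrt_eq_rpow,
    ← Real.rpow_mul_natCast (by positivity)]
  ring_nf

lemma integral_norm_rpow_mul_exp_neg_half_norm_sq [Nontrivial E] {q : ℝ}
    (hq : -Module.finrank ℝ E < q) :
    ∫ x : E, Real.exp (-(1 / 2) * ‖x‖ ^ 2) * ‖x‖ ^ q =
      (2 * Real.pi) ^ (Module.finrank ℝ E / 2 : ℝ) * (2 ^ (q / 2) *
        Real.Gamma ((Module.finrank ℝ E + q) / 2) / Real.Gamma (Module.finrank ℝ E / 2)) := by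
  have hpos : 0 < Module.finrank ℝ E := Module.finrank_pos
  rw [integral_fun_norm_addHaar (volume : Measure E)
    fun r => Real.exp (-(1 / 2) * r ^ 2) * r ^ q, measureReal_ball_zero_one]
  set d : ℕ := Module.finrank ℝ E
  have hd : 0 < (d / 2 : ℝ) := by positivity
  have hradial : ∫ r in Set.Ioi (0 : ℝ), r ^ (d - 1) • (Real.exp (-(1 / 2) * r ^ 2) * r ^ q) =
      2 ^ (d / 2 : ℝ) * 2 ^ (q / 2) * (1 / 2) * Real.Gamma ((d + q) / 2) := by
    calc _ = ∫ r in Set.Ioi (0 : ℝ), r ^ (d - 1 + q) * Real.exp (-(1 / 2) * r ^ (2 : ℝ)) := by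
          refine setIntegral_congr_fun measurableSet_Ioi fun r (hr : 0 < r) => ?_
          simp only [smul_eq_mul]
          rw [Real.rpow_add hr, Real.rpow_two, ← Real.rpow_natCast, Nat.cast_pred hpos]
          ring
      _ = _ := by
          rw [integral_rpow_mul_exp_neg_mul_rpow two_pos (by linarith) (by norm_num),
            ← Real.rpow_add two_pos, one_div, Real.inv_rpow two_pos.le, ← Real.rpow_neg two_pos.le]
          ring_nf
  rw [hradial, Real.Gamma_add_one hd.ne', Real.mul_rpow two_pos.le Real.pi_pos.le]
  have := (Real.Gamma_pos_of_pos hd).ne'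
  simp only [nsmul_eq_mul, smul_eq_mul]
  field_simp

theorem integral_norm_rpow_stdGaussian [Nontrivial E] {q : ℝ} (hq : -Module.finrank ℝ E < q) :
    ∫ x, ‖x‖ ^ q ∂(stdGaussian E) =
      2 ^ (q / 2) * Real.Gamma ((Module.finrank ℝ E + q) / 2) /
        Real.Gamma (Module.finrank ℝ E / 2) := by
  rw [integral_stdGaussian]
  simp only [stdGaussianDensity, smul_eq_mul, mul_assoc]
  rw [integral_const_mul, integral_norm_rpow_mul_exp_neg_half_norm_sq hq, ← mul_assoc,
    ← Real.rpow_add (by positivity), neg_add_cancel, Real.rpow_zero, one_mul, mul_div_assoc]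

end GaussianMoments

section QuarterTurnInvariance

variable {μ : Measure ℂ}

lemma integral_inner_eq_zero_of_measurePreserving_I_mul
    (hI : MeasurePreserving (fun z => Complex.I * z) μ μ) (t : ℂ) : ∫ z, ⟪z, t⟫ ∂μ = 0 := by
  have hemb := measurableEmbedding_mulLeft₀ Complex.I_ne_zero
  have hneg := (hI.comp hI).integral_comp (hemb.comp hemb) fun z => ⟪z, t⟫
  simp only [Function.comp_apply, ← mul_assoc, Complex.I_mul_I, neg_one_mul, inner_neg_left,
    integral_neg] at hneg
  linarith

lemma inner_sq_add_inner_I_mul_sq (z t : ℂ) :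
    ⟪z, t⟫ ^ 2 + ⟪Complex.I * z, t⟫ ^ 2 = ‖t‖ ^ 2 * ‖z‖ ^ 2 := by
  simp only [Complex.inner, Complex.mul_re, Complex.mul_im, Complex.conj_re, Complex.conj_im,
    Complex.I_re, Complex.I_im, Complex.sq_norm, Complex.normSq_apply]
  ring

lemma integral_inner_sq_of_measurePreserving_I_mul
    (hI : MeasurePreserving (fun z => Complex.I * z) μ μ)
    (hint : Integrable (fun z => ‖z‖ ^ 2) μ) (t : ℂ) :
    ∫ z, ⟪z, t⟫ ^ 2 ∂μ = (∫ z, ‖z‖ ^ 2 ∂μ) / 2 * ‖t‖ ^ 2 := by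
  have hturn := hI.integral_comp (measurableEmbedding_mulLeft₀ Complex.I_ne_zero)
    fun z => ⟪z, t⟫ ^ 2
  have hint₁ : Integrable (fun z => ⟪z, t⟫ ^ 2) μ := by
    refine (hint.const_mul (‖t‖ ^ 2)).mono' (by fun_prop) (ae_of_all _ fun z => ?_)
    rw [Real.norm_of_nonneg (sq_nonneg _), ← inner_sq_add_inner_I_mul_sq]
    exact le_add_of_nonneg_right (sq_nonneg _)
  have hint₂ : Integrable (fun z => ⟪Complex.I * z, t⟫ ^ 2) μ :=
    hI.integrable_comp_of_integrable hint₁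
  have hsum : ∫ z, (⟪z, t⟫ ^ 2 + ⟪Complex.I * z, t⟫ ^ 2) ∂μ = ‖t‖ ^ 2 * ∫ z, ‖z‖ ^ 2 ∂μ := by
    simp only [inner_sq_add_inner_I_mul_sq, integral_const_mul]
  rw [integral_add hint₁ hint₂, hturn] at hsum
  linarith

lemma integral_norm_rpow_stdGaussian_complex {q : ℝ} (hq : -2 < q) :
    ∫ z : ℂ, ‖z‖ ^ q ∂(stdGaussian ℂ) = 2 ^ (q / 2) * Real.Gamma (q / 2 + 1) := by
  rw [integral_norm_rpow_stdGaussian (by simpa [Complex.finrank_real_complex] using hq),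
    Complex.finrank_real_complex, Nat.cast_ofNat, div_self two_ne_zero, Real.Gamma_one, div_one]
  ring_nf

lemma integral_norm_rpow_sqrt_div_mul_sum (α : ℝ≥0) (n : ℕ) {q : ℝ} :
    ∫ z : Fin n → ℂ, ‖(√(α / n) : ℂ) * ∑ i, z i‖ ^ q ∂(Measure.pi fun _ => μ) =
      2 ^ (-(q / 2)) * ∫ z, ‖z‖ ^ q ∂(normalizedSumLaw μ (2 * α)⁻¹ n) := by
  have hscale : √(α / n) = (√2)⁻¹ * (√(n * (2 * α)⁻¹))⁻¹ := by
    rw [← Real.sqrt_inv, ← Real.sqrt_inv, ← Real.sqrt_mul (by positivity), NNReal.coe_inv,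
      mul_inv, inv_inv, NNReal.coe_mul, NNReal.coe_ofNat]
    congr 1
    ring
  have hfactor : (√2)⁻¹ ^ q = 2 ^ (-(q / 2)) := by
    rw [Real.sqrt_eq_rpow, ← Real.rpow_neg two_pos.le, ← Real.rpow_mul two_pos.le]
    ring_nf
  rw [normalizedSumLaw, integral_map (by fun_prop)
    (Measurable.aestronglyMeasurable (by fun_prop)), ← integral_const_mul]
  congr with z
  rw [← Complex.real_smul, hscale, mul_smul, norm_smul, Real.norm_of_nonneg (by positivity),
    Real.mul_rpow (by positivity) (norm_nonneg _), hfactor]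

end QuarterTurnInvariance

theorem clt_moment_limit_general {μ : Measure ℂ} [IsProbabilityMeasure μ]
    (hI : MeasurePreserving (fun z => Complex.I * z) μ μ) {R : ℝ≥0} (hR : ∀ᵐ z ∂μ, ‖z‖ ≤ R)
    {α : ℝ} (hα : 0 < α) (hvar : ∫ z, ‖z‖ ^ 2 ∂μ = 1 / α) {q : ℝ} (hq : 0 < q) :
    Tendsto
      (fun n : ℕ =>
        ∫ z : Fin n → ℂ, ‖(√(α / n) : ℂ) * ∑ i, z i‖ ^ q ∂(Measure.pi fun _ => μ))
      atTop (𝓝 (Real.Gamma (q / 2 + 1))) := by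
  lift α to ℝ≥0 using hα.le
  have hα0 : (0 : ℝ≥0) < α := by exact_mod_cast hα
  have hint : Integrable (fun z => ‖z‖ ^ 2) μ :=
    .of_integral_ne_zero (by rw [hvar]; positivity)
  have hcov (t : ℂ) : ∫ z, ⟪z, t⟫ ^ 2 ∂μ = ((2 * α)⁻¹ : ℝ≥0) * ‖t‖ ^ 2 := by
    rw [integral_inner_sq_of_measurePreserving_I_mul hI hint, hvar]
    push_cast
    ring
  have hmoment := (tendsto_integral_norm_rpow_normalizedSumLaw (by positivity) hR
    (integral_inner_eq_zero_of_measurePreserving_I_mul hI) hcov hq).const_mul (2 ^ (-(q / 2)))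
  rw [integral_norm_rpow_stdGaussian_complex (by linarith), ← mul_assoc,
    ← Real.rpow_add two_pos, neg_add_cancel, Real.rpow_zero, one_mul] at hmoment
  simpa only [integral_norm_rpow_sqrt_div_mul_sum] using hmoment

section BergmanMeasure

lemma measurePreserving_withDensity_of_comp_eq {Ω : Type*} [MeasurableSpace Ω] {μ : Measure Ω}
    {f : Ω → Ω} (hf : MeasurePreserving f μ μ) {g : Ω → ℝ≥0∞} (hg : Measurable g)
    (hfg : g ∘ f = g) : MeasurePreserving f (μ.withDensity g) (μ.withDensity g) where
  measurable := hf.measurable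
  map_eq := by
    ext s hs
    rw [Measure.map_apply hf.measurable hs, withDensity_apply _ (hf.measurable hs),
      withDensity_apply _ hs, ← hf.setLIntegral_comp_preimage hs hg]
    exact congrArg (fun h => ∫⁻ x in f ⁻¹' s, h x ∂μ) hfg.symm

variable {α : ℝ}

lemma measurePreserving_bergmanMeasure (e : ℂ ≃ₗᵢ[ℝ] ℂ) :
    MeasurePreserving e (bergmanMeasure α) (bergmanMeasure α) := by
  have hball := e.measurePreserving.restrict_preimage (s := ball (0 : ℂ) 1) measurableSet_ball
  rw [e.preimage_ball, map_zero] at hball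
  exact measurePreserving_withDensity_of_comp_eq hball (by fun_prop) (by ext z; simp)

lemma measurePreserving_I_mul_bergmanMeasure :
    MeasurePreserving (fun z => Complex.I * z) (bergmanMeasure α) (bergmanMeasure α) :=
  measurePreserving_bergmanMeasure (rotation ⟨Complex.I, by simp [Submonoid.unitSphere]⟩)

lemma ae_bergmanMeasure_norm_lt_one : ∀ᵐ z ∂(bergmanMeasure α), ‖z‖ < 1 := by
  refine (withDensity_absolutelyContinuous _ _).ae_le ?_
  filter_upwards [ae_restrict_mem measurableSet_ball] with z hz using mem_ball_zero_iff.1 hz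

lemma integral_Ioo_mul_one_sub_sq_rpow {β : ℝ} (hβ : 0 < β) :
    ∫ r in Set.Ioo (0 : ℝ) 1, r * (1 - r ^ 2) ^ (β - 1) = 1 / (2 * β) := by
  have hpos {r : ℝ} (hr : r ∈ Set.Ioo (0 : ℝ) 1) : 0 < 1 - r ^ 2 := by nlinarith [hr.1, hr.2]
  have hcont : ContinuousOn (fun r : ℝ => -(1 - r ^ 2) ^ β / (2 * β)) (Set.Icc 0 1) :=
    ((ContinuousOn.rpow_const (by fun_prop) fun _ _ => Or.inr hβ.le).neg).div_const _
  have hderiv (r : ℝ) (hr : r ∈ Set.Ioo (0 : ℝ) 1) :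
      HasDerivAt (fun r : ℝ => -(1 - r ^ 2) ^ β / (2 * β)) (r * (1 - r ^ 2) ^ (β - 1)) r := by
    have h := (((hasDerivAt_pow 2 r).const_sub 1).rpow_const (p := β)
      (Or.inl (hpos hr).ne')).neg.div_const (2 * β)
    convert! h using 1
    field_simp
    ring_nf
  have hint := intervalIntegral.integrableOn_deriv_of_nonneg hcont hderiv fun r hr =>
    mul_nonneg hr.1.le (Real.rpow_nonneg (hpos hr).le _)
  rw [← integral_Ioc_eq_integral_Ioo, ← intervalIntegral.integral_of_le zero_le_one,
    intervalIntegral.integral_eq_sub_of_hasDerivAt_of_le zero_le_one hcont hderiv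
      ((intervalIntegrable_iff_integrableOn_Ioc_of_le zero_le_one).2 hint)]
  simp [Real.zero_rpow hβ.ne', neg_div]

lemma setIntegral_ball_one_sub_norm_sq_rpow {β : ℝ} (hβ : 0 < β) :
    ∫ z in ball (0 : ℂ) 1, (1 - ‖z‖ ^ 2) ^ (β - 1) = Real.pi / β := by
  have hball : (ball (0 : ℂ) 1).indicator (fun z => (1 - ‖z‖ ^ 2) ^ (β - 1)) =
      fun z => (Set.Iio (1 : ℝ)).indicator (fun r => (1 - r ^ 2) ^ (β - 1)) ‖z‖ := by
    ext z
    simp [Set.indicator]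
  have hradial : ∫ r in Set.Ioi (0 : ℝ), r ^ (Module.finrank ℝ ℂ - 1) •
      (Set.Iio (1 : ℝ)).indicator (fun r => (1 - r ^ 2) ^ (β - 1)) r = 1 / (2 * β) := by
    simp only [Complex.finrank_real_complex, Nat.add_one_sub_one, pow_one, smul_eq_mul]
    simp only [← Set.indicator_mul_right _ fun r : ℝ => r]
    rw [setIntegral_indicator measurableSet_Iio, Set.Ioi_inter_Iio,
      integral_Ioo_mul_one_sub_sq_rpow hβ]
  rw [← integral_indicator measurableSet_ball, hball, integral_fun_norm_addHaar, hradial]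
  simp only [Measure.real, Complex.volume_ball, Complex.finrank_real_complex, ENNReal.ofReal_one,
    one_pow, one_mul, ENNReal.coe_toReal, NNReal.coe_real_pi, smul_eq_mul, nsmul_eq_mul,
    Nat.cast_ofNat]
  field_simp

lemma integral_bergmanMeasure {E : Type*} [NormedAddCommGroup E] [NormedSpace ℝ E]
    (hα : 1 < α) (g : ℂ → E) :
    ∫ z, g z ∂(bergmanMeasure α) =
      ∫ z in ball (0 : ℂ) 1, ((α - 1) * (1 - ‖z‖ ^ 2) ^ (α - 2) / Real.pi) • g z := by
  rw [bergmanMeasure, integral_withDensity_eq_integral_toReal_smul (by fun_prop) (by simp)]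
  refine setIntegral_congr_fun measurableSet_ball fun z hz => ?_
  have hz1 : 0 ≤ 1 - ‖z‖ ^ 2 := by nlinarith [norm_nonneg z, mem_ball_zero_iff.1 hz]
  have : 0 < α - 1 := sub_pos.2 hα
  rw [ENNReal.toReal_ofReal (by positivity)]

lemma integral_one_sub_norm_sq_rpow_bergmanMeasure (hα : 1 < α) {s : ℝ} (hs : 1 - α < s) :
    ∫ z, (1 - ‖z‖ ^ 2) ^ s ∂(bergmanMeasure α) = (α - 1) / (α - 1 + s) := by
  have hpoint (z : ℂ) (hz : z ∈ ball (0 : ℂ) 1) :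
      ((α - 1) * (1 - ‖z‖ ^ 2) ^ (α - 2) / Real.pi) • (1 - ‖z‖ ^ 2) ^ s =
        (α - 1) / Real.pi * (1 - ‖z‖ ^ 2) ^ (α - 1 + s - 1) := by
    have hz1 : 0 < 1 - ‖z‖ ^ 2 := by nlinarith [norm_nonneg z, mem_ball_zero_iff.1 hz]
    rw [show α - 1 + s - 1 = α - 2 + s by ring, Real.rpow_add hz1, smul_eq_mul]
    ring
  rw [integral_bergmanMeasure hα, setIntegral_congr_fun measurableSet_ball hpoint,
    integral_const_mul, setIntegral_ball_one_sub_norm_sq_rpow (by linarith)]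
  field_simp

lemma isProbabilityMeasure_bergmanMeasure (hα : 1 < α) :
    IsProbabilityMeasure (bergmanMeasure α) := by
  have h := integral_one_sub_norm_sq_rpow_bergmanMeasure hα (s := 0) (by linarith)
  rw [add_zero, div_self (sub_pos.2 hα).ne'] at h
  simp only [Real.rpow_zero, integral_const, smul_eq_mul, mul_one] at h
  exact ⟨(ENNReal.toReal_eq_one_iff _).1 h⟩

lemma integral_norm_sq_bergmanMeasure (hα : 1 < α) :
    ∫ z, ‖z‖ ^ 2 ∂(bergmanMeasure α) = 1 / α := by
  have := isProbabilityMeasure_bergmanMeasure hα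
  have h := integral_one_sub_norm_sq_rpow_bergmanMeasure hα (s := 1) (by linarith)
  have hint : Integrable (fun z => ‖z‖ ^ 2) (bergmanMeasure α) := by
    refine .of_bound (by fun_prop) 1 ?_
    filter_upwards [ae_bergmanMeasure_norm_lt_one] with z hz
    simpa using hz.le
  simp only [Real.rpow_one, sub_add_cancel] at h
  rw [integral_sub (integrable_const 1) hint, integral_const, probReal_univ, one_smul,
    sub_div, div_self (by linarith)] at h
  linarith

end BergmanMeasure

/-- The central-limit computation: with `p_{α,n}(𝐳) = √(α/n) ∑ᵢ zᵢ`, one has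
`lim_{n→∞} ‖p_{α,n}^m‖_{A_α^p(𝔻ⁿ)} = Γ(mp/2 + 1)^{1/p}`. -/
theorem clt_moment_limit
    (m : ℕ) (hm : 0 < m) (p α : ℝ) (hp : 0 < p) (hα : 1 < α) :
    Tendsto
      (fun n : ℕ =>
        (∫ z : Fin n → ℂ,
            ‖(Real.sqrt (α / n) : ℂ) * ∑ i, z i‖ ^ ((m : ℝ) * p)
          ∂(bergmanMeasurePi n α)) ^ (1 / p))
      atTop (nhds (Real.Gamma ((m : ℝ) * p / 2 + 1) ^ (1 / p))) := by
  have := isProbabilityMeasure_bergmanMeasure hα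
  exact (clt_moment_limit_general measurePreserving_I_mul_bergmanMeasure (R := 1)
    (ae_bergmanMeasure_norm_lt_one.mono fun _ hz => hz.le) (by linarith)
    (integral_norm_sq_bergmanMeasure hα) (by positivity)).rpow_const (Or.inr (by positivity))
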